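/- (Accuracy of the randomized proximal TT-ALS update.) Fix $k \in [d]$, let $H_k = G_{>k}^{\top} \otimes G_{<k} \in \mathbb{R}^{\prod_{i \ne k} n_i \times r_{k-1} r_k}$ have full column rank with $\prod_{i \ne k} n_i > r_{k-1} r_k$, let $\mathcal{A} \in \mathbb{R}^{n_1 \times \cdots \times n_d}$, $\sigma > 0$, and set $s = r_{k-1} r_k$ and $q = d - 1$. Let $S \in \mathbb{R}^{m \times \prod_{i\ne k} n_i}$ be a random TensorSketch matrix generated by mutually independent 3-wise independent hash maps and mutually independent 4-wise independent sign functions. If $m = \max\{8 s^2 (2+3^q)/\delta,\; 8 s (2+3^q)/(\epsilon \delta)\}$, then with probability at least $1 - \delta$, the unique minimizer $\mathcal{G}_k^{(t+1)}$ of the sketched proximal subproblem $\min_{\mathcal{G}_k} \frac{1}{2}\|S H_k \mathcal{G}_{k(2)}^{\top} - S \mathcal{A}_{(k)}^{\top}\|_F^2 + \frac{\sigma}{2}\|\mathcal{G}_k - \mathcal{G}_k^{(t)}\|_F^2$ satisfies $\frac{1}{2}\|H_k (\mathcal{G}^{(t+1)}_{k(2)})^{\top} - \mathcal{A}_{(k)}^{\top}\|_F^2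 + \frac{\sigma}{2}\|\mathcal{G}_k^{(t+1)} - \mathcal{G}_k^{(t)}\|_F^2 \le (1+\epsilon) \cdot OPT$, where $OPT$ is the optimal value of $\min_{\mathcal{G}_k} \frac{1}{2}\|H_k \mathcal{G}_{k(2)}^{\top} - \mathcal{A}_{(k)}^{\top}\|_F^2 + \frac{\sigma}{2}\|\mathcal{G}_k - \mathcal{G}_k^{(t)}\|_F^2$. -/

import Mathlib

open Matrix MeasureTheory

/-- The CountSketch-type matrix determined by a hash map `h` and a sign vector `v`:
`S j i = v i` if `h i = j` and `0` otherwise. -/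
def countSketch {m : ℕ} {ι : Type*} (h : ι → Fin m) (v : ι → ℝ) :
    Matrix (Fin m) ι ℝ :=
  Matrix.of fun j i => if h i = j then v i else 0

/-- The combined TensorSketch hash map of a family of hash maps `h k : [n k] → [m]`:
`h(i₁,…,i_q) = ((∑ k (h_k(i_k) - 1)) mod m) + 1` (in zero-based form, the mod-`m` sum). -/
def hashFam {m : ℕ} [NeZero m] {q : ℕ} {n : Fin q → ℕ} (h : ∀ k, Fin (n k) → Fin m) :
    (∀ k, Fin (n k)) → Fin m :=
  fun i => ⟨(∑ k, (h k (i k) : ℕ)) % m, Nat.mod_lt _ (Nat.pos_of_ne_zero (NeZero.ne m))⟩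

/-- The TensorSketch matrix generated by hash maps `h k` and sign functions `v k`:
the CountSketch-type matrix with hash map `hashFam h` and sign `i ↦ ∏ k, v k (i k)`. -/
def tsMat {m q : ℕ} [NeZero m] {n : Fin q → ℕ}
    (h : ∀ k, Fin (n k) → Fin m) (v : ∀ k, Fin (n k) → ℝ) :
    Matrix (Fin m) (∀ k, Fin (n k)) ℝ :=
  countSketch (hashFam h) (fun i => ∏ k, v k (i k))

/-- The squared Frobenius norm of a real matrix. -/
def frobSq {α β : Type*} [Fintype α] [Fintype β] (A : Matrix α β ℝ) : ℝ :=
  ∑ i, ∑ j, A i j ^ 2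

/-- A random hash map `h : Ω → ι → Fin m` is `k`-wise independent: each value `h(i)` is
uniformly distributed on `[m]`, and any at most `k` values at distinct indices are mutually
independent (their joint distribution factorizes). -/
def KWiseIndepHash {Ω : Type*} [MeasurableSpace Ω] (μ : Measure Ω) (k : ℕ)
    {ι : Type*} {m : ℕ} (h : Ω → ι → Fin m) : Prop :=
  (∀ (i : ι) (j : Fin m), μ {ω | h ω i = j} = 1 / (m : ENNReal)) ∧
  ∀ t : Finset ι, t.card ≤ k → ∀ j : ι → Fin m,
    μ {ω | ∀ i ∈ t, h ω i = j i} = ∏ i ∈ t, μ {ω | h ω i = j i}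

/-- A random sign function `v : Ω → ι → ℝ` is `k`-wise independent: it takes values in
`{-1, 1}`, each value is uniform on `{-1, 1}`, and any at most `k` values at distinct
indices are mutually independent. -/
def KWiseIndepSign {Ω : Type*} [MeasurableSpace Ω] (μ : Measure Ω) (k : ℕ)
    {ι : Type*} (v : Ω → ι → ℝ) : Prop :=
  (∀ ω i, v ω i = 1 ∨ v ω i = -1) ∧
  (∀ (i : ι) (x : ℝ), x = 1 ∨ x = -1 → μ {ω | v ω i = x} = 1 / 2) ∧
  ∀ t : Finset ι, t.card ≤ k → ∀ x : ι → ℝ,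
    μ {ω | ∀ i ∈ t, v ω i = x i} = ∏ i ∈ t, μ {ω | v ω i = x i}

/-- The random hash maps `H k` and random sign functions `V k` are all mutually independent
(as finitely-valued random variables, their joint distribution factorizes). -/
def IndepHashSigns {Ω : Type*} [MeasurableSpace Ω] (μ : Measure Ω)
    {κ : Type*} [Fintype κ] {n : κ → ℕ} {m : ℕ}
    (H : ∀ k, Ω → Fin (n k) → Fin m) (V : ∀ k, Ω → Fin (n k) → ℝ) : Prop :=
  ∀ (g : ∀ k, Fin (n k) → Fin m) (w : ∀ k, Fin (n k) → ℝ),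
    μ {ω | (∀ k, H k ω = g k) ∧ (∀ k, V k ω = w k)} =
      (∏ k, μ {ω | H k ω = g k}) * ∏ k, μ {ω | V k ω = w k}

/-- The combined TensorSketch hash map of two hash maps (mod-`m` sum). -/
def hashPair {m : ℕ} [NeZero m] {ι₁ ι₂ : Type*} (h₁ : ι₁ → Fin m) (h₂ : ι₂ → Fin m) :
    ι₁ × ι₂ → Fin m :=
  fun i => ⟨((h₁ i.1 : ℕ) + (h₂ i.2 : ℕ)) % m, Nat.mod_lt _ (Nat.pos_of_ne_zero (NeZero.ne m))⟩

/-- The chain product of TT-core slices: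
`ttChain r n G p i = G 0 (i 0) * G 1 (i 1) * ⋯ * G (p-1) (i (p-1))`. -/
def ttChain (r n : ℕ → ℕ) {α : Type*} [Semiring α]
    (G : (j : ℕ) → Fin (n j) → Matrix (Fin (r j)) (Fin (r (j + 1))) α) :
    (p : ℕ) → ((j : Fin p) → Fin (n j)) → Matrix (Fin (r 0)) (Fin (r p)) α
  | 0, _ => 1
  | p + 1, i => ttChain r n G p (fun j => i j.castSucc) * G p (i (Fin.last p))

/-!
Write `S` for the sketch, `H` for the design matrix and `R = H * X* - A` for the optimal residual.
Let `U` have orthonormal columns spanning the column space of `H`. Comparing the first-order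
conditions of the two proximal problems shows that the sketched minimizer is within a factor
`1 + ε` of the optimum as soon as `‖Uᵀ (Sᵀ S - 1) U‖² ≤ 1/4` and
`‖Uᵀ (Sᵀ S - 1) R‖² ≤ ε/4 ‖R‖²`; the proximal term only helps, as it makes the problem more convex.

Both events follow from Markov's inequality and a second-moment bound for `uᵀ (Sᵀ S - 1) r`, whose
square is a 4-linear form in `(u, r, u, r)`. An off-diagonal entry of `Sᵀ S` vanishes unless two
indices collide under the hash map, which has probability `1/m` by pairwise independence, and
4-wise independence makes a mean of four signs vanish unless their indices pair up. The array
counting the pairings of four indices defines a 4-linear form of norm at most `3`, one inner-product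
term per pairing, and such norms multiply over the `q` modes. Hence the variance is at most
`3^q/m ‖u‖² ‖r‖²`.
-/

section Frobenius

variable {α β γ : Type*} [Fintype α] [Fintype β] [Fintype γ]

lemma trace_transpose_mul_eq_sum (A B : Matrix α β ℝ) :
    (Aᵀ * B).trace = ∑ i, ∑ j, A i j * B i j := by
  simp only [trace, diag_apply, mul_apply, transpose_apply]
  exact Finset.sum_comm

lemma frobSq_eq_trace (A : Matrix α β ℝ) : frobSq A = (Aᵀ * A).trace := by
  simp only [frobSq, trace_transpose_mul_eq_sum, sq]

lemma frobSq_nonneg (A : Matrix α β ℝ) : 0 ≤ frobSq A :=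
  Finset.sum_nonneg fun _ _ => Finset.sum_nonneg fun _ _ => sq_nonneg _

lemma sq_trace_transpose_mul_le (A B : Matrix α β ℝ) :
    (Aᵀ * B).trace ^ 2 ≤ frobSq A * frobSq B := by
  simp only [trace_transpose_mul_eq_sum, frobSq, ← Fintype.sum_prod_type']
  exact Finset.sum_mul_sq_le_sq_mul_sq _ _ _

lemma frobSq_mul_le (A : Matrix α β ℝ) (B : Matrix β γ ℝ) :
    frobSq (A * B) ≤ frobSq A * frobSq B := by
  calc frobSq (A * B)
      ≤ ∑ i, ∑ k, (∑ j, A i j ^ 2) * ∑ j, B j k ^ 2 := by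
        simp only [frobSq, mul_apply]
        gcongr
        exact Finset.sum_mul_sq_le_sq_mul_sq _ _ _
    _ = frobSq A * frobSq B := by
        rw [← Finset.sum_mul_sum, Finset.sum_comm (f := fun k j => B j k ^ 2), frobSq, frobSq]

lemma frobSq_add (A B : Matrix α β ℝ) :
    frobSq (A + B) = frobSq A + 2 * (Aᵀ * B).trace + frobSq B := by
  simp only [frobSq, trace_transpose_mul_eq_sum, Finset.mul_sum, ← Finset.sum_add_distrib,
    Matrix.add_apply]
  congr! 2
  ring

lemma frobSq_smul (t : ℝ) (A : Matrix α β ℝ) : frobSq (t • A) = t ^ 2 * frobSq A := by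
  simp only [frobSq, Matrix.smul_apply, smul_eq_mul, mul_pow, Finset.mul_sum]

variable [DecidableEq β] {U : Matrix α β ℝ}

lemma frobSq_mul_eq_of_transpose_mul_self_eq_one (hU : Uᵀ * U = 1) (B : Matrix β γ ℝ) :
    frobSq (U * B) = frobSq B := by
  rw [frobSq_eq_trace, transpose_mul, Matrix.mul_assoc, ← Matrix.mul_assoc Uᵀ, hU, Matrix.one_mul,
    frobSq_eq_trace]

lemma frobSq_eq_card_of_transpose_mul_self_eq_one (hU : Uᵀ * U = 1) :
    frobSq U = Fintype.card β := by
  rw [frobSq_eq_trace, hU, trace_one]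

end Frobenius

section Proximal

variable {α β γ τ ρ : Type*} [Fintype α] [Fintype β] [Fintype γ] [Fintype τ] [Fintype ρ]

/-- The objective `½ ‖M X - B‖² + σ/2 ‖X - X₀‖²` of a proximal least-squares problem, in the
Frobenius norm. -/
noncomputable def proxObjective (M : Matrix α β ℝ) (B : Matrix α γ ℝ) (X₀ : Matrix β γ ℝ) (σ : ℝ)
    (X : Matrix β γ ℝ) : ℝ :=
  1 / 2 * frobSq (M * X - B) + σ / 2 * frobSq (X - X₀)

variable {M : Matrix α β ℝ} {B : Matrix α γ ℝ} {X₀ X Y : Matrix β γ ℝ} {σ : ℝ}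

lemma proxObjective_add (M : Matrix α β ℝ) (B : Matrix α γ ℝ) (X₀ : Matrix β γ ℝ) (σ : ℝ)
    (X D : Matrix β γ ℝ) :
    proxObjective M B X₀ σ (X + D) = proxObjective M B X₀ σ X
      + (((M * D)ᵀ * (M * X - B)).trace + σ * (Dᵀ * (X - X₀)).trace)
      + (1 / 2 * frobSq (M * D) + σ / 2 * frobSq D) := by
  have hfit : M * (X + D) - B = M * D + (M * X - B) := by rw [Matrix.mul_add]; abel
  have hprox : X + D - X₀ = D + (X - X₀) := by abel
  rw [proxObjective, hfit, hprox, frobSq_add, frobSq_add, proxObjective]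
  ring

lemma proxObjective_stationary
    (hX : ∀ X', proxObjective M B X₀ σ X ≤ proxObjective M B X₀ σ X') (D : Matrix β γ ℝ) :
    ((M * D)ᵀ * (M * X - B)).trace + σ * (Dᵀ * (X - X₀)).trace = 0 := by
  set slope := ((M * D)ᵀ * (M * X - B)).trace + σ * (Dᵀ * (X - X₀)).trace with hslope
  have hquad (t : ℝ) :
      0 ≤ (1 / 2 * frobSq (M * D) + σ / 2 * frobSq D) * (t * t) + slope * t + 0 := by
    have h := hX (X + t • D)
    rw [proxObjective_add, Matrix.mul_smul, transpose_smul, transpose_smul, smul_mul, smul_mul,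
      trace_smul, trace_smul, frobSq_smul, frobSq_smul, smul_eq_mul, smul_eq_mul] at h
    linear_combination h + t * hslope
  simpa [discrim, sq_nonpos_iff] using discrim_le_zero hquad

lemma proxObjective_le_of_sketch (hσ : 0 ≤ σ) {S : Matrix τ α ℝ} {η : ℝ}
    (hη : 0 ≤ η) (hX : ∀ X', proxObjective M B X₀ σ X ≤ proxObjective M B X₀ σ X')
    (hY : ∀ Y', proxObjective (S * M) (S * B) X₀ σ Y ≤ proxObjective (S * M) (S * B) X₀ σ Y')
    (hembed : frobSq (M * (Y - X)) ≤ 2 * frobSq (S * M * (Y - X)))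
    (hcross : (((S * M * (Y - X))ᵀ * (S * (M * X - B))).trace
      - ((M * (Y - X))ᵀ * (M * X - B)).trace) ^ 2 ≤ η * frobSq (M * (Y - X))) :
    proxObjective M B X₀ σ Y ≤ proxObjective M B X₀ σ X + 2 * η := by
  obtain ⟨D, rfl⟩ : ∃ D, Y = X + D := ⟨Y - X, (add_sub_cancel _ _).symm⟩
  rw [add_sub_cancel_left] at hembed hcross
  set z := frobSq (M * D)
  set g := 1 / 2 * z + σ * frobSq D with hg
  have hstatX := proxObjective_stationary hX D
  have hstatY := proxObjective_stationary hY D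
  have hexpand : ((S * M * D)ᵀ * (S * M * (X + D) - S * B)).trace =
      ((S * M * D)ᵀ * (S * (M * X - B))).trace + frobSq (S * M * D) := by
    rw [frobSq_eq_trace, ← trace_add, ← Matrix.mul_add]
    congr 2
    simp only [Matrix.mul_add, Matrix.mul_sub, Matrix.mul_assoc]
    abel
  have hprox : (Dᵀ * (X + D - X₀)).trace = (Dᵀ * (X - X₀)).trace + frobSq D := by
    rw [frobSq_eq_trace, ← trace_add, ← Matrix.mul_add]
    congr 2
    abel
  have hσD : 0 ≤ σ * frobSq D := mul_nonneg hσ (frobSq_nonneg D)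
  have hg_nonneg : 0 ≤ g := by have := frobSq_nonneg (M * D); positivity
  have hg_le : g ≤ ((M * D)ᵀ * (M * X - B)).trace
      - ((S * M * D)ᵀ * (S * (M * X - B))).trace := by
    rw [hexpand, hprox] at hstatY
    linarith
  have hg_sq : g ^ 2 ≤ η * z := by
    refine (pow_le_pow_left₀ hg_nonneg hg_le 2).trans (le_of_eq_of_le ?_ hcross)
    ring
  have hg_le_two_mul : g ≤ 2 * η := by
    by_contra! hlt
    have hz : z ≤ 2 * g := by linarith
    nlinarith [mul_le_mul_of_nonneg_left hz hη]
  rw [proxObjective_add, hstatX]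
  linarith

lemma trace_sketch_sub_trace [DecidableEq α] (S : Matrix τ α ℝ) (U : Matrix α ρ ℝ)
    (Z : Matrix ρ γ ℝ) (T : Matrix α γ ℝ) :
    ((S * (U * Z))ᵀ * (S * T)).trace - ((U * Z)ᵀ * T).trace =
      (Zᵀ * (Uᵀ * (Sᵀ * S - 1) * T)).trace := by
  rw [← trace_sub]
  simp only [transpose_mul, Matrix.mul_assoc, Matrix.sub_mul, Matrix.mul_sub, Matrix.one_mul]

lemma frobSq_le_two_mul_frobSq_sketch [DecidableEq α] [DecidableEq ρ] {S : Matrix τ α ℝ}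
    {U : Matrix α ρ ℝ} (hU : Uᵀ * U = 1) (hembed : frobSq (Uᵀ * (Sᵀ * S - 1) * U) ≤ 1 / 4)
    (Z : Matrix ρ γ ℝ) : frobSq (U * Z) ≤ 2 * frobSq (S * (U * Z)) := by
  have hUZ := frobSq_mul_eq_of_transpose_mul_self_eq_one hU Z
  have hdist : (frobSq (S * (U * Z)) - frobSq (U * Z)) ^ 2 ≤ (1 / 2 * frobSq (U * Z)) ^ 2 := by
    calc (frobSq (S * (U * Z)) - frobSq (U * Z)) ^ 2
        = (Zᵀ * (Uᵀ * (Sᵀ * S - 1) * U * Z)).trace ^ 2 := by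
          rw [frobSq_eq_trace, frobSq_eq_trace, trace_sketch_sub_trace, Matrix.mul_assoc _ U Z]
      _ ≤ frobSq Z * frobSq (Uᵀ * (Sᵀ * S - 1) * U * Z) := sq_trace_transpose_mul_le _ _
      _ ≤ frobSq Z * (1 / 4 * frobSq Z) := by
          have := frobSq_nonneg Z
          grw [frobSq_mul_le, hembed]
      _ = (1 / 2 * frobSq (U * Z)) ^ 2 := by rw [hUZ]; ring
  have hhalf : 0 ≤ 1 / 2 * frobSq (U * Z) := by have := frobSq_nonneg (U * Z); positivity
  linarith [(abs_le.mp (abs_le_of_sq_le_sq hdist hhalf)).1]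

lemma proxObjective_le_one_add_mul [DecidableEq α] [DecidableEq ρ] (hσ : 0 ≤ σ)
    {S : Matrix τ α ℝ} {U : Matrix α ρ ℝ} {W : Matrix ρ β ℝ} {ε : ℝ} (hε : 0 ≤ ε)
    (hU : Uᵀ * U = 1) (hM : M = U * W)
    (hX : ∀ X', proxObjective M B X₀ σ X ≤ proxObjective M B X₀ σ X')
    (hY : ∀ Y', proxObjective (S * M) (S * B) X₀ σ Y ≤ proxObjective (S * M) (S * B) X₀ σ Y')
    (hembed : frobSq (Uᵀ * (Sᵀ * S - 1) * U) ≤ 1 / 4)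
    (hcross : frobSq (Uᵀ * (Sᵀ * S - 1) * (M * X - B)) ≤ ε / 4 * frobSq (M * X - B)) :
    proxObjective M B X₀ σ Y ≤ (1 + ε) * proxObjective M B X₀ σ X := by
  set R := M * X - B
  have hMD : M * (Y - X) = U * (W * (Y - X)) := by rw [hM, Matrix.mul_assoc]
  have hSMD : S * M * (Y - X) = S * (U * (W * (Y - X))) := by rw [Matrix.mul_assoc, hMD]
  have hnonneg := mul_nonneg (div_nonneg hε zero_le_four) (frobSq_nonneg R)
  have hle := proxObjective_le_of_sketch hσ hnonneg hX hY
    (by rw [hSMD, hMD]; exact frobSq_le_two_mul_frobSq_sketch hU hembed _) (by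
      rw [hSMD, hMD, trace_sketch_sub_trace, frobSq_mul_eq_of_transpose_mul_self_eq_one hU]
      refine (sq_trace_transpose_mul_le _ _).trans ?_
      rw [mul_comm]
      exact mul_le_mul_of_nonneg_right hcross (frobSq_nonneg _))
  have hopt : 1 / 2 * frobSq R ≤ proxObjective M B X₀ σ X :=
    le_add_of_nonneg_right (mul_nonneg (by positivity) (frobSq_nonneg _))
  nlinarith [mul_le_mul_of_nonneg_left hopt hε]

end Proximal

section OrthonormalColumns

variable {𝕜 α β : Type*} [RCLike 𝕜] [Fintype β]

lemma finrank_span_toLp_col (M : Matrix α β 𝕜) :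
    Module.finrank 𝕜 (Submodule.span 𝕜 (Set.range fun c => WithLp.toLp 2 (M.col c))) = M.rank := by
  rw [M.rank_eq_finrank_span_cols,
    ← LinearEquiv.finrank_map_eq (WithLp.linearEquiv 2 𝕜 (α → 𝕜)).symm, Submodule.map_span,
    ← Set.range_comp]
  rfl

lemma exists_orthonormal_columns_mul_eq [Fintype α] (M : Matrix α β 𝕜) :
    ∃ U : Matrix α (Fin M.rank) 𝕜, Uᴴ * U = 1 ∧ U * (Uᴴ * M) = M := by
  set L := Submodule.span 𝕜 (Set.range fun c => WithLp.toLp 2 (M.col c))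
  let b := (stdOrthonormalBasis 𝕜 L).reindex (finCongr (finrank_span_toLp_col M))
  have hinner (a) (x : EuclideanSpace 𝕜 α) :
      inner 𝕜 (b a : EuclideanSpace 𝕜 α) x = ∑ i, star ((b a : EuclideanSpace 𝕜 α) i) * x i := by
    simp [PiLp.inner_apply, mul_comm]
  refine ⟨of fun i a => (b a : EuclideanSpace 𝕜 α) i, ?_, ?_⟩
  · ext a c
    rw [mul_apply, one_apply, ← orthonormal_iff_ite.1 b.orthonormal a c, Submodule.coe_inner,
      hinner]
    rfl
  · ext i c
    have hmem : WithLp.toLp 2 (M.col c) ∈ L := Submodule.subset_span ⟨c, rfl⟩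
    have hrepr := congr((($(b.sum_repr' ⟨_, hmem⟩) : L) : EuclideanSpace 𝕜 α) i)
    simp only [Submodule.coe_sum, Submodule.coe_smul, Submodule.coe_inner, WithLp.ofLp_sum,
      Finset.sum_apply, PiLp.smul_apply, smul_eq_mul, hinner] at hrepr
    simp only [mul_apply]
    exact (Finset.sum_congr rfl fun a _ => mul_comm _ _).trans hrepr

end OrthonormalColumns

section MultilinearBound

variable {τ I J : Type*} [Fintype τ] [DecidableEq τ] [Fintype I] [Fintype J]

/-- The `τ`-linear form `∑ i, K i * ∏ t, a t (i t)` with coefficient array `K` is bounded by `C` in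
the Euclidean norms of its arguments. -/
def MultilinearBound (K : (τ → I) → ℝ) (C : ℝ) : Prop :=
  ∀ a : τ → EuclideanSpace ℝ I, ∑ i, K i * ∏ t, a t (i t) ≤ C * ∏ t, ‖a t‖

lemma norm_toLp_norm_slice (a : EuclideanSpace ℝ (I × J)) :
    ‖WithLp.toLp 2 fun i => ‖WithLp.toLp 2 fun j => a (i, j)‖‖ = ‖a‖ := by
  rw [← sq_eq_sq₀ (norm_nonneg _) (norm_nonneg _)]
  simp only [EuclideanSpace.norm_sq_eq, norm_norm, Fintype.sum_prod_type]

namespace MultilinearBound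

lemma prod {K : (τ → I) → ℝ} {L : (τ → J) → ℝ} {C D : ℝ} (hK : MultilinearBound K C)
    (hL : MultilinearBound L D) (hK_nonneg : 0 ≤ K) (hD : 0 ≤ D) :
    MultilinearBound (fun i : τ → I × J => K (fun t => (i t).1) * L (fun t => (i t).2))
      (C * D) := by
  intro a
  let slice (t : τ) (x : I) : EuclideanSpace ℝ J := WithLp.toLp 2 fun y => a t (x, y)
  calc ∑ i : τ → I × J, K (fun t => (i t).1) * L (fun t => (i t).2) * ∏ t, a t (i t)
      = ∑ i, K i * ∑ j, L j * ∏ t, slice t (i t) (j t) := by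
        simp only [Finset.mul_sum, ← mul_assoc, ← Fintype.sum_prod_type']
        exact Fintype.sum_equiv (Equiv.arrowProdEquivProdArrow τ _ _) _ _ fun _ => rfl
    _ ≤ ∑ i, K i * (D * ∏ t, ‖slice t (i t)‖) := by
        gcongr with i
        · exact hK_nonneg i
        · exact hL _
    _ = D * ∑ i, K i * ∏ t, (WithLp.toLp 2 fun x => ‖slice t x‖ : EuclideanSpace ℝ I) (i t) := by
        rw [Finset.mul_sum]
        exact Finset.sum_congr rfl fun _ _ => mul_left_comm _ _ _
    _ ≤ D * (C * ∏ t, ‖a t‖) := by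
        gcongr
        exact (hK _).trans_eq (by simp only [slice, norm_toLp_norm_slice])
    _ = C * D * ∏ t, ‖a t‖ := by ring

lemma comp_equiv {K : (τ → J) → ℝ} {C : ℝ} (hK : MultilinearBound K C) (e : I ≃ J) :
    MultilinearBound (fun i : τ → I => K (e ∘ i)) C := by
  intro a
  let b (t : τ) : EuclideanSpace ℝ J := WithLp.toLp 2 fun x => a t (e.symm x)
  have hnorm (t : τ) : ‖b t‖ = ‖a t‖ := (LinearIsometryEquiv.piLpCongrLeft 2 ℝ ℝ e).norm_map (a t)
  calc ∑ i, K (e ∘ i) * ∏ t, a t (i t)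
      = ∑ j, K j * ∏ t, b t (j t) :=
        Fintype.sum_equiv ((Equiv.refl τ).arrowCongr e) _ _ fun i => by
          simp only [b, Equiv.arrowCongr_apply, Equiv.refl_symm, Equiv.coe_refl,
            Function.comp_apply, Equiv.symm_apply_apply, Function.comp_id]
          rfl
    _ ≤ C * ∏ t, ‖a t‖ := (hK b).trans_eq (by simp only [hnorm])

lemma const_mul {K : (τ → I) → ℝ} {C c : ℝ} (hK : MultilinearBound K C) (hc : 0 ≤ c) :
    MultilinearBound (fun i => c * K i) (c * C) := by
  intro a
  simp only [mul_assoc, ← Finset.mul_sum]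
  exact mul_le_mul_of_nonneg_left (hK a) hc

lemma one_of_unique [Unique I] : MultilinearBound (fun _ : τ → I => 1) 1 := by
  intro a
  simp only [Fintype.sum_unique, one_mul, EuclideanSpace.norm_eq, Real.sqrt_sq (norm_nonneg _)]
  exact (le_abs_self _).trans_eq (Finset.abs_prod _ _)

lemma pi_fin {q : ℕ} {ι : Fin q → Type*} [∀ k, Fintype (ι k)] {K : ∀ k, (τ → ι k) → ℝ}
    {C : Fin q → ℝ} (hK : ∀ k, MultilinearBound (K k) (C k)) (hK_nonneg : ∀ k, 0 ≤ K k)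
    (hC : ∀ k, 0 ≤ C k) :
    MultilinearBound (fun i : τ → ∀ k, ι k => ∏ k, K k fun t => i t k) (∏ k, C k) := by
  induction q with
  | zero => simpa using one_of_unique
  | succ q ih =>
    simp only [Fin.prod_univ_succ]
    exact ((hK 0).prod (ih (fun k => hK k.succ) (fun k => hK_nonneg k.succ) fun k => hC k.succ)
      (hK_nonneg 0) (Finset.prod_nonneg fun k _ => hC k.succ)).comp_equiv (Fin.consEquiv ι).symm

lemma pi {κ : Type*} [Fintype κ] [DecidableEq κ] {ι : κ → Type*} [∀ k, Fintype (ι k)]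
    {K : ∀ k, (τ → ι k) → ℝ} {C : κ → ℝ} (hK : ∀ k, MultilinearBound (K k) (C k))
    (hK_nonneg : ∀ k, 0 ≤ K k) (hC : ∀ k, 0 ≤ C k) :
    MultilinearBound (fun i : τ → ∀ k, ι k => ∏ k, K k fun t => i t k) (∏ k, C k) := by
  let e := (Fintype.equivFin κ).symm
  simp only [← e.prod_comp]
  exact (pi_fin (fun k => hK (e k)) (fun k => hK_nonneg (e k)) fun k => hC (e k)).comp_equiv
    (Equiv.piCongrLeft ι e).symm

end MultilinearBound

lemma sum_fin_four_arrow (f : I → I → I → I → ℝ) :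
    ∑ i : Fin 4 → I, f (i 0) (i 1) (i 2) (i 3) = ∑ x, ∑ y, ∑ z, ∑ w, f x y z w := by
  let e : (Fin 4 → I) ≃ I × I × I × I :=
    { toFun i := (i 0, i 1, i 2, i 3)
      invFun x := ![x.1, x.2.1, x.2.2.1, x.2.2.2]
      left_inv i := by ext t; fin_cases t <;> rfl
      right_inv _ := rfl }
  simp only [← Fintype.sum_prod_type']
  exact Fintype.sum_equiv e _ _ fun _ => rfl

end MultilinearBound

section PairingCount

variable {I : Type*} [DecidableEq I]

/-- The number of ways to split the index set `Fin 4` into two pairs on each of which `i` is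
constant. -/
def pairingCount (i : Fin 4 → I) : ℝ :=
  (if i 0 = i 1 ∧ i 2 = i 3 then 1 else 0) + (if i 0 = i 2 ∧ i 1 = i 3 then 1 else 0) +
    (if i 0 = i 3 ∧ i 1 = i 2 then 1 else 0)

lemma pairingCount_nonneg (i : Fin 4 → I) : 0 ≤ pairingCount i := by
  unfold pairingCount
  positivity

variable [Fintype I]

lemma sum_pairingCount_mul_prod (a : Fin 4 → I → ℝ) :
    ∑ i : Fin 4 → I, pairingCount i * ∏ t, a t (i t) =
      (∑ x, a 0 x * a 1 x) * (∑ x, a 2 x * a 3 x) + (∑ x, a 0 x * a 2 x) * (∑ x, a 1 x * a 3 x)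
        + (∑ x, a 0 x * a 3 x) * (∑ x, a 1 x * a 2 x) := by
  simp only [Fin.prod_univ_four, pairingCount]
  rw [sum_fin_four_arrow fun x y z w => ((if x = y ∧ z = w then 1 else 0)
    + (if x = z ∧ y = w then 1 else 0) + (if x = w ∧ y = z then 1 else 0))
    * (a 0 x * a 1 y * a 2 z * a 3 w)]
  simp only [add_mul, Finset.sum_add_distrib, ite_and, ite_mul, one_mul, zero_mul,
    Finset.sum_mul_sum, Finset.sum_ite_irrel, Finset.sum_ite_eq, Finset.sum_const_zero,
    Finset.mem_univ, if_true]
  refine congr_arg₂ _ (congr_arg₂ _ ?_ ?_) ?_ <;>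
    exact Finset.sum_congr rfl fun x _ => Finset.sum_congr rfl fun y _ => by ring

lemma multilinearBound_pairingCount : MultilinearBound (pairingCount (I := I)) 3 := by
  intro a
  have hinner (s t : Fin 4) : |∑ x, a s x * a t x| ≤ ‖a s‖ * ‖a t‖ := by
    rw [mul_comm ‖a s‖]
    exact abs_real_inner_le_norm (a t) (a s)
  have hpair (s t u v : Fin 4) : (∑ x, a s x * a t x) * (∑ x, a u x * a v x) ≤
      ‖a s‖ * ‖a t‖ * (‖a u‖ * ‖a v‖) := by
    refine (le_abs_self _).trans ?_
    rw [abs_mul]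
    gcongr <;> exact hinner _ _
  rw [sum_pairingCount_mul_prod fun t => a t, Fin.prod_univ_four]
  linarith [hpair 0 1 2 3, hpair 0 2 1 3, hpair 0 3 1 2]

end PairingCount

section SecondMoment

variable {Ω I α β : Type*} [MeasurableSpace Ω] {μ : Measure Ω} [Fintype I] [Fintype α] [Fintype β]

lemma measureReal_lt_le_of_integral_le_mul [IsFiniteMeasure μ] {f : Ω → ℝ} (hf : 0 ≤ f)
    (hint : Integrable f μ) {η p : ℝ} (hη : 0 ≤ η) (hp : 0 ≤ p) (hle : ∫ ω, f ω ∂μ ≤ η * p) :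
    μ.real {ω | η < f ω} ≤ p := by
  rcases hη.eq_or_lt with rfl | hη
  · have hzero : f =ᵐ[μ] 0 := by
      rw [← integral_eq_zero_iff_of_nonneg hf hint]
      exact le_antisymm (by simpa using hle) (integral_nonneg hf)
    have hnull : μ.real {ω | 0 < f ω} = 0 :=
      (measureReal_eq_zero_iff).2 (measure_mono_null (fun _ hω => hω.ne') (ae_iff.1 hzero))
    exact hnull.trans_le hp
  · have hmono : μ.real {ω | η < f ω} ≤ μ.real {ω | η ≤ f ω} :=
      measureReal_mono fun _ (hω : η < _) => hω.le
    have hmarkov := mul_meas_ge_le_integral_of_nonneg (.of_forall hf) hint η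
    exact hmono.trans (le_of_mul_le_mul_left (hmarkov.trans hle) hη)

lemma sq_dotProduct_mulVec (u r : I → ℝ) (Z : Matrix I I ℝ) :
    (u ⬝ᵥ Z *ᵥ r) ^ 2 =
      ∑ i : Fin 4 → I, Z (i 0) (i 1) * Z (i 2) (i 3) * ∏ t, ![u, r, u, r] t (i t) := by
  simp only [Fin.prod_univ_four]
  rw [sum_fin_four_arrow fun x y z w => Z x y * Z z w *
    (![u, r, u, r] 0 x * ![u, r, u, r] 1 y * ![u, r, u, r] 2 z * ![u, r, u, r] 3 w)]
  have hexpand : u ⬝ᵥ Z *ᵥ r = ∑ x, ∑ y, u x * (Z x y * r y) := by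
    simp only [dotProduct, mulVec, Finset.mul_sum]
  rw [sq, hexpand, Finset.sum_mul]
  refine Finset.sum_congr rfl fun x _ => ?_
  rw [Finset.sum_mul]
  refine Finset.sum_congr rfl fun y _ => ?_
  simp only [Finset.mul_sum]
  refine Finset.sum_congr rfl fun z _ => Finset.sum_congr rfl fun w _ => ?_
  change _ = Z x y * Z z w * (u x * r y * u z * r w)
  ring

lemma frobSq_transpose_mul_mul (U : Matrix I α ℝ) (Z : Matrix I I ℝ) (R : Matrix I β ℝ) :
    frobSq (Uᵀ * Z * R) = ∑ a, ∑ b, (U.col a ⬝ᵥ Z *ᵥ R.col b) ^ 2 := by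
  rw [Matrix.mul_assoc]
  rfl

/-- Products of two entries of the random matrix `Z` are integrable, and their means are dominated
by a 4-linear form with bound `C`. -/
def SecondMomentBound (μ : Measure Ω) (Z : Ω → Matrix I I ℝ) (C : ℝ) : Prop :=
  ∃ K : (Fin 4 → I) → ℝ, MultilinearBound K C ∧
    ∀ i, Integrable (fun ω => Z ω (i 0) (i 1) * Z ω (i 2) (i 3)) μ ∧
      |∫ ω, Z ω (i 0) (i 1) * Z ω (i 2) (i 3) ∂μ| ≤ K i

namespace SecondMomentBound

variable {Z : Ω → Matrix I I ℝ} {C : ℝ}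

lemma submatrix_equiv {J : Type*} [Fintype J] (hZ : SecondMomentBound μ Z C) (e : J ≃ I) :
    SecondMomentBound μ (fun ω => (Z ω).submatrix e e) C := by
  obtain ⟨K, hK, hmoment⟩ := hZ
  exact ⟨_, hK.comp_equiv e, fun i => hmoment (e ∘ i)⟩

lemma integrable_sq_dotProduct_mulVec (hZ : SecondMomentBound μ Z C) (u r : I → ℝ) :
    Integrable (fun ω => (u ⬝ᵥ Z ω *ᵥ r) ^ 2) μ := by
  obtain ⟨K, -, hmoment⟩ := hZ
  simp only [sq_dotProduct_mulVec]
  exact integrable_finsetSum _ fun i _ => (hmoment i).1.mul_const _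

lemma integral_sq_dotProduct_mulVec_le (hZ : SecondMomentBound μ Z C) (u r : I → ℝ) :
    ∫ ω, (u ⬝ᵥ Z ω *ᵥ r) ^ 2 ∂μ ≤ C * ((∑ x, u x ^ 2) * ∑ x, r x ^ 2) := by
  obtain ⟨K, hK, hmoment⟩ := hZ
  let a (t : Fin 4) : EuclideanSpace ℝ I := WithLp.toLp 2 fun x => |![u, r, u, r] t x|
  have hnorm (t : Fin 4) : ‖a t‖ ^ 2 = ∑ x, ![u, r, u, r] t x ^ 2 := by
    simp [a, EuclideanSpace.norm_sq_eq]
  calc ∫ ω, (u ⬝ᵥ Z ω *ᵥ r) ^ 2 ∂μ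
      = ∑ i : Fin 4 → I, (∫ ω, Z ω (i 0) (i 1) * Z ω (i 2) (i 3) ∂μ) *
          ∏ t, ![u, r, u, r] t (i t) := by
        simp only [sq_dotProduct_mulVec]
        rw [integral_finsetSum _ fun i _ => (hmoment i).1.mul_const _]
        simp only [integral_mul_const]
    _ ≤ ∑ i, K i * ∏ t, a t (i t) := by
        refine Finset.sum_le_sum fun i _ => (le_abs_self _).trans ?_
        rw [abs_mul, Finset.abs_prod]
        exact mul_le_mul_of_nonneg_right (hmoment i).2 (Finset.prod_nonneg fun _ _ => abs_nonneg _)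
    _ ≤ C * ∏ t, ‖a t‖ := hK a
    _ = C * (‖a 0‖ ^ 2 * ‖a 1‖ ^ 2) := by
        rw [Fin.prod_univ_four]
        change C * (‖a 0‖ * ‖a 1‖ * ‖a 0‖ * ‖a 1‖) = _
        ring
    _ = C * ((∑ x, u x ^ 2) * ∑ x, r x ^ 2) := by
        rw [hnorm, hnorm]
        rfl

lemma integrable_frobSq_transpose_mul_mul (hZ : SecondMomentBound μ Z C) (U : Matrix I α ℝ)
    (R : Matrix I β ℝ) : Integrable (fun ω => frobSq (Uᵀ * Z ω * R)) μ := by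
  simp only [frobSq_transpose_mul_mul]
  exact integrable_finsetSum _ fun _ _ => integrable_finsetSum _ fun _ _ =>
    hZ.integrable_sq_dotProduct_mulVec _ _

lemma integral_frobSq_transpose_mul_mul_le (hZ : SecondMomentBound μ Z C) (U : Matrix I α ℝ)
    (R : Matrix I β ℝ) : ∫ ω, frobSq (Uᵀ * Z ω * R) ∂μ ≤ C * (frobSq U * frobSq R) := by
  calc ∫ ω, frobSq (Uᵀ * Z ω * R) ∂μ
      = ∑ a, ∑ b, ∫ ω, (U.col a ⬝ᵥ Z ω *ᵥ R.col b) ^ 2 ∂μ := by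
        have hint a b := hZ.integrable_sq_dotProduct_mulVec (U.col a) (R.col b)
        simp only [frobSq_transpose_mul_mul]
        rw [integral_finsetSum _ fun a _ => integrable_finsetSum _ fun b _ => hint a b]
        exact Finset.sum_congr rfl fun a _ => integral_finsetSum _ fun b _ => hint a b
    _ ≤ ∑ a, ∑ b, C * ((∑ x, U.col a x ^ 2) * ∑ x, R.col b x ^ 2) := by
        gcongr
        exact hZ.integral_sq_dotProduct_mulVec_le _ _
    _ = C * (frobSq U * frobSq R) := by
        simp only [← Finset.mul_sum, ← Finset.sum_mul, frobSq, col_apply]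
        rw [Finset.sum_comm, Finset.sum_comm (s := (Finset.univ : Finset β))]

lemma measureReal_lt_frobSq_transpose_mul_mul_le [IsFiniteMeasure μ]
    (hZ : SecondMomentBound μ Z C) {U : Matrix I α ℝ} {R : Matrix I β ℝ} {η p : ℝ} (hη : 0 ≤ η)
    (hp : 0 ≤ p) (hle : C * (frobSq U * frobSq R) ≤ η * p) :
    μ.real {ω | η < frobSq (Uᵀ * Z ω * R)} ≤ p :=
  measureReal_lt_le_of_integral_le_mul (fun _ => frobSq_nonneg _)
    (hZ.integrable_frobSq_transpose_mul_mul U R) hη hp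
    ((hZ.integral_frobSq_transpose_mul_mul_le U R).trans hle)

end SecondMomentBound

end SecondMoment

section SketchedProximal

variable {Ω α β γ τ : Type*} [MeasurableSpace Ω] {μ : Measure Ω} [IsProbabilityMeasure μ]
  [Fintype α] [DecidableEq α] [Fintype β] [Fintype γ] [Fintype τ]

lemma one_sub_le_measureReal_proxObjective_le {S : Ω → Matrix τ α ℝ} {C : ℝ}
    (hS : SecondMomentBound μ (fun ω => (S ω)ᵀ * S ω - 1) C) {M : Matrix α β ℝ} {B : Matrix α γ ℝ}
    {X₀ X : Matrix β γ ℝ} {σ ε δ : ℝ} (hσ : 0 ≤ σ) (hε : 0 ≤ ε) (hδ : 0 ≤ δ)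
    (hX : ∀ X', proxObjective M B X₀ σ X ≤ proxObjective M B X₀ σ X')
    (hembed : C * M.rank ^ 2 ≤ δ / 8) (hcross : C * M.rank ≤ ε * δ / 8) :
    1 - δ ≤ μ.real {ω | ∀ Y, (∀ Y', proxObjective (S ω * M) (S ω * B) X₀ σ Y ≤
      proxObjective (S ω * M) (S ω * B) X₀ σ Y') →
        proxObjective M B X₀ σ Y ≤ (1 + ε) * proxObjective M B X₀ σ X} := by
  set accurate := {ω | ∀ Y, (∀ Y', proxObjective (S ω * M) (S ω * B) X₀ σ Y ≤
    proxObjective (S ω * M) (S ω * B) X₀ σ Y') →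
      proxObjective M B X₀ σ Y ≤ (1 + ε) * proxObjective M B X₀ σ X}
  obtain ⟨U, hU, hUM⟩ := exists_orthonormal_columns_mul_eq M
  rw [conjTranspose_eq_transpose_of_trivial] at hU
  have hU_frob : frobSq U = M.rank := by
    rw [frobSq_eq_card_of_transpose_mul_self_eq_one hU, Fintype.card_fin]
  let R := M * X - B
  have hR : 0 ≤ frobSq R := frobSq_nonneg R
  let distorted := {ω | 1 / 4 < frobSq (Uᵀ * ((S ω)ᵀ * S ω - 1) * U)}
  let correlated := {ω | ε / 4 * frobSq R < frobSq (Uᵀ * ((S ω)ᵀ * S ω - 1) * R)}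
  have hdistorted : μ.real distorted ≤ δ / 2 :=
    hS.measureReal_lt_frobSq_transpose_mul_mul_le (by norm_num) (by positivity)
      (by rw [hU_frob]; linarith)
  have hcorrelated : μ.real correlated ≤ δ / 2 :=
    hS.measureReal_lt_frobSq_transpose_mul_mul_le (by positivity) (by positivity)
      (by rw [hU_frob]; linarith [mul_le_mul_of_nonneg_right hcross hR])
  have hsubset : (distorted ∪ correlated)ᶜ ⊆ accurate := fun ω hω Y hY =>
    proxObjective_le_one_add_mul hσ hε hU hUM.symm hX hY
      (not_lt.1 fun h => hω (.inl h)) (not_lt.1 fun h => hω (.inr h))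
  have hcover : 1 ≤ μ.real (distorted ∪ correlated) + μ.real (distorted ∪ correlated)ᶜ := by
    rw [← probReal_univ (μ := μ), ← Set.union_compl_self (distorted ∪ correlated)]
    exact measureReal_union_le _ _
  linarith [measureReal_union_le (μ := μ) distorted correlated, measureReal_mono (μ := μ) hsubset]

end SketchedProximal

section FiniteValued

open ProbabilityTheory

variable {Ω : Type*} [MeasurableSpace Ω] {μ : Measure Ω}

lemma nullMeasurableSet_of_measure_add_measure_compl_le [IsFiniteMeasure μ] {s : Set Ω}
    (h : μ s + μ sᶜ ≤ μ Set.univ) : NullMeasurableSet s μ := by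
  let t := (toMeasurable μ sᶜ)ᶜ
  have ht : MeasurableSet t := (measurableSet_toMeasurable μ sᶜ).compl
  have hts : t ⊆ s := Set.compl_subset_comm.1 (subset_toMeasurable μ sᶜ)
  have hle : μ s ≤ μ t := by
    refine ENNReal.le_of_add_le_add_right (measure_ne_top μ sᶜ) (h.trans_eq ?_)
    rw [← measure_toMeasurable sᶜ, add_comm (μ t),
      measure_add_measure_compl (measurableSet_toMeasurable μ sᶜ)]
  exact ht.nullMeasurableSet.congr
    (ae_eq_of_subset_of_measure_ge hts hle ht.nullMeasurableSet (measure_ne_top μ s))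

lemma aemeasurable_of_sum_measure_eq_le {E : Type*} [Fintype E] [MeasurableSpace E]
    [MeasurableSingletonClass E] [IsFiniteMeasure μ] {f : Ω → E}
    (h : ∑ x, μ {ω | f ω = x} ≤ μ Set.univ) : AEMeasurable f μ := by
  classical
  have hfiber (x : E) : NullMeasurableSet {ω | f ω = x} μ := by
    refine nullMeasurableSet_of_measure_add_measure_compl_le (le_trans ?_ h)
    rw [← Finset.add_sum_erase _ _ (Finset.mem_univ x)]
    gcongr
    exact (measure_mono fun ω hω => by simpa using hω).trans (measure_biUnion_finset_le _ _)
  refine NullMeasurable.aemeasurable fun s _ => ?_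
  rw [← Set.biUnion_preimage_singleton]
  exact .biUnion s.to_countable fun x _ => hfiber x

lemma indepFun_of_measure_eq_and_eq [IsFiniteMeasure μ] {E F : Type*} [Countable E] [Countable F]
    [MeasurableSpace E] [MeasurableSpace F] [MeasurableSingletonClass E]
    [MeasurableSingletonClass F] {f : Ω → E} {g : Ω → F} (hf : AEMeasurable f μ)
    (hg : AEMeasurable g μ)
    (h : ∀ x y, μ {ω | f ω = x ∧ g ω = y} = μ {ω | f ω = x} * μ {ω | g ω = y}) :
    IndepFun f g μ := by
  rw [indepFun_iff_map_prod_eq_prod_map_map hf hg]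
  refine Measure.ext_of_singleton fun ⟨x, y⟩ => ?_
  rw [← Set.singleton_prod_singleton, Measure.prod_prod,
    Measure.map_apply_of_aemeasurable (hf.prodMk hg)
      ((MeasurableSet.singleton x).prod (MeasurableSet.singleton y)),
    Measure.map_apply_of_aemeasurable hf (.singleton x),
    Measure.map_apply_of_aemeasurable hg (.singleton y)]
  exact h x y

lemma measure_eq_comp_of_indepFun [IsProbabilityMeasure μ] {E F : Type*} [Countable E] [Countable F]
    [MeasurableSpace E] [MeasurableSpace F] [MeasurableSingletonClass E]
    [MeasurableSingletonClass F] {X : Ω → E} {Y : Ω → F} (hX : AEMeasurable X μ)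
    (hY : AEMeasurable Y μ) (hXY : IndepFun X Y μ) {c : ENNReal} (hc : ∀ x, μ {ω | X ω = x} = c)
    (φ : F → E) : μ {ω | X ω = φ (Y ω)} = c := by
  have : IsProbabilityMeasure (μ.map Y) := Measure.isProbabilityMeasure_map hY
  have hmap (x : E) : μ.map X {x} = c :=
    (Measure.map_apply_of_aemeasurable hX (.singleton x)).trans (hc x)
  calc μ {ω | X ω = φ (Y ω)}
      = μ.map (fun ω => (X ω, Y ω)) {z | z.1 = φ z.2} := by
        rw [Measure.map_apply_of_aemeasurable (hX.prodMk hY) .of_discrete]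
        rfl
    _ = ∫⁻ y, μ.map X {φ y} ∂μ.map Y := by
        rw [hXY.map_prod_eq_prod_map_map hX hY, Measure.prod_apply_symm .of_discrete]
        rfl
    _ = c := by simp [hmap]

end FiniteValued

section KWiseIndependence

open ProbabilityTheory

variable {Ω ι E : Type*} [MeasurableSpace Ω] {μ : Measure Ω} [Fintype E]

/-- A random function `f` into a finite type is `k`-wise uniform if each value is uniformly
distributed and any at most `k` values are independent. This is the common form of
`KWiseIndepHash` and `KWiseIndepSign`. -/
def KWiseUniform (μ : Measure Ω) (k : ℕ) (f : Ω → ι → E) : Prop :=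
  (∀ i x, μ {ω | f ω i = x} = (Fintype.card E : ENNReal)⁻¹) ∧
    ∀ t : Finset ι, t.card ≤ k → ∀ x : ι → E,
      μ {ω | ∀ i ∈ t, f ω i = x i} = ∏ i ∈ t, μ {ω | f ω i = x i}

lemma KWiseIndepHash.kWiseUniform {k m : ℕ} {h : Ω → ι → Fin m} (hh : KWiseIndepHash μ k h) :
    KWiseUniform μ k h :=
  ⟨fun i x => by rw [hh.1, Fintype.card_fin, one_div], hh.2⟩

lemma KWiseIndepSign.kWiseUniform {k : ℕ} {v : Ω → ι → ℝ} (hv : KWiseIndepSign μ k v) :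
    KWiseUniform μ k fun ω i => (⟨v ω i, by simpa using hv.1 ω i⟩ : ({1, -1} : Finset ℝ)) := by
  refine ⟨fun i x => ?_, fun t ht x => ?_⟩
  · simp only [Subtype.ext_iff]
    rw [hv.2.1 i x (by simpa only [Finset.mem_insert, Finset.mem_singleton] using x.2),
      Fintype.card_coe, Finset.card_pair (by norm_num), one_div, Nat.cast_ofNat]
  · simp only [Subtype.ext_iff]
    exact hv.2.2 t ht fun i => x i

namespace KWiseUniform

variable {k : ℕ} {f : Ω → ι → E}

variable [MeasurableSpace E] [MeasurableSingletonClass E] [IsProbabilityMeasure μ]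

lemma aemeasurable_apply (hf : KWiseUniform μ k f) (i : ι) : AEMeasurable (fun ω => f ω i) μ := by
  refine aemeasurable_of_sum_measure_eq_le ?_
  simp only [hf.1, Finset.sum_const, Finset.card_univ, nsmul_eq_mul, measure_univ]
  exact ENNReal.mul_inv_le_one _

lemma aemeasurable [Countable ι] (hf : KWiseUniform μ k f) : AEMeasurable f μ :=
  aemeasurable_pi_lambda _ hf.aemeasurable_apply

lemma indepFun (hf : KWiseUniform μ k f) {i : ι} {t : Finset ι} (hi : i ∉ t) (ht : t.card < k) :
    IndepFun (fun ω => f ω i) (fun ω => t.restrict (f ω)) μ := by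
  classical
  refine indepFun_of_measure_eq_and_eq (hf.aemeasurable_apply i)
    (aemeasurable_pi_lambda _ fun j => hf.aemeasurable_apply j) fun x y => ?_
  let z (j : ι) : E := if hj : j ∈ t then y ⟨j, hj⟩ else x
  have hzi : z i = x := dif_neg hi
  have hrestrict (ω : Ω) : t.restrict (f ω) = y ↔ ∀ j ∈ t, f ω j = z j := by
    simp +contextual [funext_iff, z]
  have hinsert := hf.2 (insert i t) ((Finset.card_insert_le i t).trans ht) z
  simp only [Finset.forall_mem_insert, Finset.prod_insert hi, hzi] at hinsert
  simp only [hrestrict]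
  rw [hinsert, hf.2 t ht.le z]

lemma integral_comp_apply (hf : KWiseUniform μ k f) (i : ι) (g : E → ℝ) :
    ∫ ω, g (f ω i) ∂μ = (Fintype.card E : ℝ)⁻¹ * ∑ x, g x := by
  have hmap (x : E) : (μ.map fun ω => f ω i).real {x} = (Fintype.card E : ℝ)⁻¹ := by
    rw [map_measureReal_apply_of_aemeasurable (hf.aemeasurable_apply i) (.singleton x)]
    exact (congrArg ENNReal.toReal (hf.1 i x)).trans (by simp)
  rw [← integral_map (hf.aemeasurable_apply i) (by fun_prop), integral_fintype .of_finite]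
  simp only [hmap, smul_eq_mul, Finset.mul_sum]

end KWiseUniform

end KWiseIndependence

section Collision

open ProbabilityTheory

variable {Ω κ G : Type*} [MeasurableSpace Ω] {μ : Measure Ω} [IsProbabilityMeasure μ] [Fintype κ]
  {ι : κ → Type*} [AddCommGroup G] [Fintype G] [MeasurableSpace G] [MeasurableSingletonClass G]

lemma KWiseUniform.measure_sub_eq {ι : Type*} {f : Ω → ι → G} (hf : KWiseUniform μ 2 f) {i j : ι}
    (hij : i ≠ j) (x : G) : μ {ω | f ω i - f ω j = x} = (Fintype.card G : ENNReal)⁻¹ := by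
  have hindep : IndepFun (fun ω => f ω i) (fun ω => f ω j) μ :=
    (hf.indepFun (t := {j}) (by simpa using hij) (by simp)).comp measurable_id
      (measurable_pi_apply (⟨j, by simp⟩ : ({j} : Finset ι)))
  simp only [sub_eq_iff_eq_add]
  exact measure_eq_comp_of_indepFun (hf.aemeasurable_apply i) (hf.aemeasurable_apply j) hindep
    (hf.1 i) fun y => x + y

lemma measure_sum_eq_sum_of_ne {h : ∀ k, Ω → ι k → G} (hindep : iIndepFun h μ)
    (hh : ∀ k, KWiseUniform μ 2 (h k)) {i j : ∀ k, ι k} (hij : i ≠ j) :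
    μ {ω | ∑ k, h k ω (i k) = ∑ k, h k ω (j k)} = (Fintype.card G : ENNReal)⁻¹ := by
  classical
  obtain ⟨k₀, hk₀⟩ := Function.ne_iff.1 hij
  let D (k : κ) (ω : Ω) : G := h k ω (i k) - h k ω (j k)
  have hD_meas (k : κ) : AEMeasurable (D k) μ :=
    ((hh k).aemeasurable_apply (i k)).sub ((hh k).aemeasurable_apply (j k))
  have hD_indep : iIndepFun D μ := hindep.comp (fun k f => f (i k) - f (j k)) fun k =>
    (measurable_pi_apply (i k)).sub (measurable_pi_apply (j k))
  have hrest := (hD_indep.indepFun_finsetSum_of_notMem₀ hD_meas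
    (Finset.notMem_erase k₀ Finset.univ)).symm
  have hevent (ω : Ω) : ∑ k, h k ω (i k) = ∑ k, h k ω (j k) ↔
      D k₀ ω = -(∑ k ∈ Finset.univ.erase k₀, D k) ω := by
    rw [← sub_eq_zero, ← Finset.sum_sub_distrib, ← Finset.add_sum_erase _ _ (Finset.mem_univ k₀),
      add_eq_zero_iff_eq_neg, Finset.sum_apply]
  simp only [hevent]
  exact measure_eq_comp_of_indepFun (hD_meas k₀) (Finset.aemeasurable_sum _ fun k _ => hD_meas k)
    hrest ((hh k₀).measure_sub_eq hk₀) fun y => -y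

end Collision

section Independence

open ProbabilityTheory

variable {Ω κ : Type*} [MeasurableSpace Ω] {μ : Measure Ω} [IsProbabilityMeasure μ] [Fintype κ]

lemma independent_of_measure_forall_eq_and_forall_eq {E F : κ → Type*} [∀ k, Countable (E k)]
    [∀ k, Countable (F k)] [∀ k, MeasurableSpace (E k)] [∀ k, MeasurableSpace (F k)]
    [∀ k, MeasurableSingletonClass (E k)] [∀ k, MeasurableSingletonClass (F k)]
    {X : ∀ k, Ω → E k} {Y : ∀ k, Ω → F k} (hX : ∀ k, AEMeasurable (X k) μ)
    (hY : ∀ k, AEMeasurable (Y k) μ)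
    (h : ∀ (x : ∀ k, E k) (y : ∀ k, F k), μ {ω | (∀ k, X k ω = x k) ∧ ∀ k, Y k ω = y k} =
      (∏ k, μ {ω | X k ω = x k}) * ∏ k, μ {ω | Y k ω = y k}) :
    iIndepFun X μ ∧ iIndepFun Y μ ∧ IndepFun (fun ω k => X k ω) (fun ω k => Y k ω) μ := by
  have hX_pi : AEMeasurable (fun ω k => X k ω) μ := aemeasurable_pi_lambda _ hX
  have hY_pi : AEMeasurable (fun ω k => Y k ω) μ := aemeasurable_pi_lambda _ hY
  have hX_prob k : IsProbabilityMeasure (μ.map (X k)) := Measure.isProbabilityMeasure_map (hX k)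
  have hY_prob k : IsProbabilityMeasure (μ.map (Y k)) := Measure.isProbabilityMeasure_map (hY k)
  have hjoint : μ.map (fun ω => (fun k => X k ω, fun k => Y k ω)) =
      (Measure.pi fun k => μ.map (X k)).prod (Measure.pi fun k => μ.map (Y k)) := by
    refine Measure.ext_of_singleton fun ⟨x, y⟩ => ?_
    rw [← Set.singleton_prod_singleton, Measure.prod_prod, Measure.pi_singleton,
      Measure.pi_singleton, Measure.map_apply_of_aemeasurable (hX_pi.prodMk hY_pi)
        ((MeasurableSet.singleton x).prod (MeasurableSet.singleton y))]
    simp only [Measure.map_apply_of_aemeasurable (hX _) (.singleton _),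
      Measure.map_apply_of_aemeasurable (hY _) (.singleton _)]
    refine Eq.trans (congrArg μ ?_) (h x y)
    ext ω
    simp [funext_iff]
  have hX_law : μ.map (fun ω k => X k ω) = Measure.pi fun k => μ.map (X k) := by
    rw [← Measure.fst_map_prodMk₀ hY_pi, hjoint, Measure.fst_prod]
  have hY_law : μ.map (fun ω k => Y k ω) = Measure.pi fun k => μ.map (Y k) := by
    rw [← Measure.snd_map_prodMk₀ hX_pi, hjoint, Measure.snd_prod]
  refine ⟨(iIndepFun_iff_map_fun_eq_pi_map hX).2 hX_law,
    (iIndepFun_iff_map_fun_eq_pi_map hY).2 hY_law,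
    (indepFun_iff_map_prod_eq_prod_map_map hX_pi hY_pi).2 ?_⟩
  rw [hjoint, hX_law, hY_law]

lemma KWiseIndepSign.aemeasurable {k : ℕ} {ι : Type*} [Countable ι] {v : Ω → ι → ℝ}
    (hv : KWiseIndepSign μ k v) : AEMeasurable v μ :=
  aemeasurable_pi_lambda _ fun i =>
    measurable_subtype_coe.comp_aemeasurable (hv.kWiseUniform.aemeasurable_apply i)

lemma IndepHashSigns.independent {n : κ → ℕ} {m a b : ℕ} {H : ∀ k, Ω → Fin (n k) → Fin m}
    {V : ∀ k, Ω → Fin (n k) → ℝ} (h : IndepHashSigns μ H V) (hH : ∀ k, KWiseIndepHash μ a (H k))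
    (hV : ∀ k, KWiseIndepSign μ b (V k)) :
    iIndepFun H μ ∧ iIndepFun V μ ∧ IndepFun (fun ω k => H k ω) (fun ω k => V k ω) μ := by
  let coe (k : κ) (y : Fin (n k) → ({1, -1} : Finset ℝ)) : Fin (n k) → ℝ := fun i => y i
  have hcoe (k : κ) : Measurable (coe k) := .of_discrete
  let W (k : κ) (ω : Ω) (i : Fin (n k)) : ({1, -1} : Finset ℝ) :=
    ⟨V k ω i, by simpa using (hV k).1 ω i⟩
  have hW (k : κ) (ω : Ω) (y) : W k ω = y ↔ V k ω = coe k y := by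
    simp only [funext_iff, Subtype.ext_iff, W, coe]
  obtain ⟨hH_indep, hW_indep, hHW_indep⟩ :=
    independent_of_measure_forall_eq_and_forall_eq (fun k => (hH k).kWiseUniform.aemeasurable)
      (fun k => (hV k).kWiseUniform.aemeasurable) (Y := W) fun x y => by
        simpa only [hW] using h x fun k => coe k (y k)
  let coe_pi (w : ∀ k, Fin (n k) → ({1, -1} : Finset ℝ)) (k : κ) : Fin (n k) → ℝ := coe k (w k)
  exact ⟨hH_indep, hW_indep.comp coe hcoe,
    hHW_indep.comp (φ := id) (ψ := coe_pi) measurable_id .of_discrete⟩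

end Independence

section SignMoments

open ProbabilityTheory

variable {Ω ι E : Type*} [MeasurableSpace Ω] {μ : Measure Ω} [IsProbabilityMeasure μ]

lemma KWiseUniform.integral_prod_eq_zero [Fintype E] [MeasurableSpace E]
    [MeasurableSingletonClass E] {τ : Type*} [Fintype τ] {f : Ω → ι → E}
    (hf : KWiseUniform μ (Fintype.card τ) f) {g : E → ℝ} (hg : ∑ x, g x = 0) {i : τ → ι} {t : τ}
    (ht : ∀ s ≠ t, i s ≠ i t) : ∫ ω, ∏ s, g (f ω (i s)) ∂μ = 0 := by
  classical
  let T : Finset ι := (Finset.univ.erase t).image i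
  have hmem : i t ∉ T := by simpa [T] using fun s hs => ht s hs
  have hcard : T.card < Fintype.card τ :=
    Finset.card_image_le.trans_lt (Finset.card_erase_lt_of_mem (Finset.mem_univ t))
  let ψ (y : T → E) : ℝ :=
    ∏ s ∈ (Finset.univ.erase t).attach, g (y ⟨i s, Finset.mem_image_of_mem i s.2⟩)
  have hψ (ω : Ω) : ∏ s, g (f ω (i s)) = g (f ω (i t)) * ψ (T.restrict (f ω)) := by
    rw [← Finset.mul_prod_erase _ _ (Finset.mem_univ t),
      ← Finset.prod_attach _ fun s => g (f ω (i s))]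
    rfl
  have hrest : AEMeasurable (fun ω => T.restrict (f ω)) μ :=
    aemeasurable_pi_lambda _ fun j => hf.aemeasurable_apply j
  have hmean : ∫ ω, g (f ω (i t)) ∂μ = 0 := by rw [hf.integral_comp_apply, hg, mul_zero]
  have hfactor := ((hf.indepFun hmem hcard).comp (φ := g) (ψ := ψ) .of_discrete
    .of_discrete).integral_fun_mul_eq_mul_integral
      (Measurable.of_discrete.comp_aemeasurable (hf.aemeasurable_apply _)).aestronglyMeasurable
      (Measurable.of_discrete.comp_aemeasurable hrest).aestronglyMeasurable
  simp only [Function.comp_apply, hmean, zero_mul] at hfactor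
  simpa only [hψ] using hfactor

lemma one_le_pairingCount [DecidableEq ι] {i : Fin 4 → ι} (h : ∀ t, ∃ s ≠ t, i s = i t) :
    1 ≤ pairingCount i := by
  have h0 := h 0
  have h1 := h 1
  have h2 := h 2
  have h3 := h 3
  simp only [Fin.exists_fin_succ] at h0 h1 h2 h3
  unfold pairingCount
  grind

lemma KWiseIndepSign.abs_integral_prod_le_pairingCount [DecidableEq ι] {v : Ω → ι → ℝ}
    (hv : KWiseIndepSign μ 4 v) (i : Fin 4 → ι) :
    |∫ ω, ∏ t, v ω (i t) ∂μ| ≤ pairingCount i := by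
  by_cases h : ∃ t, ∀ s ≠ t, i s ≠ i t
  · obtain ⟨t, ht⟩ := h
    have hsum : ∑ x : ({1, -1} : Finset ℝ), (x : ℝ) = 0 := by
      rw [Finset.sum_coe_sort _ fun x : ℝ => x, Finset.sum_pair (by norm_num)]
      norm_num
    have hzero : ∫ ω, ∏ s, v ω (i s) ∂μ = 0 :=
      hv.kWiseUniform.integral_prod_eq_zero hsum ht
    rw [hzero, abs_zero]
    exact pairingCount_nonneg i
  · push Not at h
    have hone (ω : Ω) : ‖∏ t, v ω (i t)‖ = 1 := by
      rw [norm_prod]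
      exact Finset.prod_eq_one fun t _ => by rcases hv.1 ω (i t) with h | h <;> simp [h]
    calc |∫ ω, ∏ t, v ω (i t) ∂μ| ≤ 1 * μ.real Set.univ :=
          norm_integral_le_of_norm_le_const (.of_forall fun ω => (hone ω).le)
      _ = 1 := by simp
      _ ≤ pairingCount i := one_le_pairingCount h

end SignMoments

section TensorGram

open ProbabilityTheory

variable {Ω κ G : Type*} [Fintype κ] {ι : κ → Type*} [∀ k, DecidableEq (ι k)] [AddCommGroup G]
  [DecidableEq G]

/-- The Gram matrix `Sᵀ * S` of the sketch with hash map `i ↦ ∑ k, h k (i k)` and sign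
`∏ k, v k (i k)`. For TensorSketch, `G` is `Fin m` with addition modulo `m`. -/
def tensorGram (h : ∀ k, ι k → G) (v : ∀ k, ι k → ℝ) : Matrix (∀ k, ι k) (∀ k, ι k) ℝ :=
  of fun i j => if ∑ k, h k (i k) = ∑ k, h k (j k) then ∏ k, v k (i k) * v k (j k) else 0

/-- The indicator that the distinct indices `i` and `j` have the same hash `∑ k, h k (i k)`. -/
def collisionIndicator (h : ∀ k, ι k → G) (i j : ∀ k, ι k) : ℝ :=
  if i ≠ j ∧ ∑ k, h k (i k) = ∑ k, h k (j k) then 1 else 0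

lemma collisionIndicator_nonneg (h : ∀ k, ι k → G) (i j : ∀ k, ι k) :
    0 ≤ collisionIndicator h i j := by
  unfold collisionIndicator
  positivity

lemma collisionIndicator_le_one (h : ∀ k, ι k → G) (i j : ∀ k, ι k) :
    collisionIndicator h i j ≤ 1 := by
  unfold collisionIndicator
  split <;> norm_num

lemma tensorGram_sub_one_apply (h : ∀ k, ι k → G) {v : ∀ k, ι k → ℝ}
    (hv : ∀ k x, v k x = 1 ∨ v k x = -1) (i j : ∀ k, ι k) :
    (tensorGram h v - 1) i j = collisionIndicator h i j * ∏ k, v k (i k) * v k (j k) := by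
  rcases eq_or_ne i j with rfl | hij
  · have hsq k : v k (i k) * v k (i k) = 1 := by rcases hv k (i k) with h | h <;> simp [h]
    simp [tensorGram, collisionIndicator, hsq]
  · simp [tensorGram, collisionIndicator, hij]

lemma tensorGram_sub_one_mul (h : ∀ k, ι k → G) {v : ∀ k, ι k → ℝ}
    (hv : ∀ k x, v k x = 1 ∨ v k x = -1) (i : Fin 4 → ∀ k, ι k) :
    (tensorGram h v - 1) (i 0) (i 1) * (tensorGram h v - 1) (i 2) (i 3) =
      collisionIndicator h (i 0) (i 1) * collisionIndicator h (i 2) (i 3) *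
        ∏ k, ∏ t, v k (i t k) := by
  simp only [tensorGram_sub_one_apply h hv, Fin.prod_univ_four, Finset.prod_mul_distrib]
  ring

variable [Finite G] [MeasurableSpace G] [MeasurableSingletonClass G] [MeasurableSpace Ω]
  {μ : Measure Ω} {H : ∀ k, Ω → ι k → G}

lemma integral_collisionIndicator_le [Fintype G] [IsProbabilityMeasure μ]
    (hH : ∀ k, KWiseUniform μ 2 (H k)) (hH_indep : iIndepFun H μ) (i j : ∀ k, ι k) :
    ∫ ω, collisionIndicator (fun k => H k ω) i j ∂μ ≤ (Fintype.card G : ℝ)⁻¹ := by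
  rcases eq_or_ne i j with rfl | hij
  · simp [collisionIndicator]
  · let s := {ω | ∑ k, H k ω (i k) = ∑ k, H k ω (j k)}
    have hs : NullMeasurableSet s μ :=
      nullMeasurableSet_eq_fun
        (Finset.aemeasurable_fun_sum _ fun k _ => (hH k).aemeasurable_apply (i k))
        (Finset.aemeasurable_fun_sum _ fun k _ => (hH k).aemeasurable_apply (j k))
    have hindicator (ω : Ω) : collisionIndicator (fun k => H k ω) i j = s.indicator 1 ω := by
      simp [collisionIndicator, hij, s, Set.indicator_apply]
    have hs_measure : μ.real s = (Fintype.card G : ℝ)⁻¹ :=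
      (congrArg ENNReal.toReal (measure_sum_eq_sum_of_ne hH_indep hH hij)).trans (by simp)
    simp only [hindicator]
    rw [integral_indicator₀ hs]
    simp [hs_measure]

variable [∀ k, Finite (ι k)]

lemma integrable_collisionIndicator [IsFiniteMeasure μ] (hH : ∀ k, AEMeasurable (H k) μ)
    (i j : ∀ k, ι k) : Integrable (fun ω => collisionIndicator (fun k => H k ω) i j) μ := by
  have hmeas : AEMeasurable (fun ω => collisionIndicator (fun k => H k ω) i j) μ :=
    (Measurable.of_discrete (f := fun h => collisionIndicator h i j)).comp_aemeasurable
      (aemeasurable_pi_lambda _ hH)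
  refine .of_bound hmeas.aestronglyMeasurable 1 (.of_forall fun ω => ?_)
  rw [Real.norm_of_nonneg (collisionIndicator_nonneg _ i j)]
  exact collisionIndicator_le_one _ i j

lemma integrable_collisionIndicator_mul [IsFiniteMeasure μ] (hH : ∀ k, AEMeasurable (H k) μ)
    (i : Fin 4 → ∀ k, ι k) :
    Integrable (fun ω => collisionIndicator (fun k => H k ω) (i 0) (i 1) *
      collisionIndicator (fun k => H k ω) (i 2) (i 3)) μ := by
  refine (integrable_collisionIndicator hH (i 0) (i 1)).mul_bdd (c := 1)
    (integrable_collisionIndicator hH (i 2) (i 3)).aestronglyMeasurable (.of_forall fun ω => ?_)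
  rw [Real.norm_of_nonneg (collisionIndicator_nonneg _ _ _)]
  exact collisionIndicator_le_one _ _ _

lemma abs_integral_collisionIndicator_mul_le [Fintype G] [IsProbabilityMeasure μ]
    (hH : ∀ k, KWiseUniform μ 2 (H k)) (hH_indep : iIndepFun H μ) (i : Fin 4 → ∀ k, ι k) :
    |∫ ω, collisionIndicator (fun k => H k ω) (i 0) (i 1) *
      collisionIndicator (fun k => H k ω) (i 2) (i 3) ∂μ| ≤ (Fintype.card G : ℝ)⁻¹ := by
  have hmeas k : AEMeasurable (H k) μ := (hH k).aemeasurable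
  rw [abs_of_nonneg (integral_nonneg fun ω =>
    mul_nonneg (collisionIndicator_nonneg _ _ _) (collisionIndicator_nonneg _ _ _))]
  refine (integral_mono (integrable_collisionIndicator_mul hmeas i)
    (integrable_collisionIndicator hmeas (i 0) (i 1)) fun ω => ?_).trans
      (integral_collisionIndicator_le hH hH_indep (i 0) (i 1))
  exact mul_le_of_le_one_right (collisionIndicator_nonneg _ _ _) (collisionIndicator_le_one _ _ _)

variable {V : ∀ k, Ω → ι k → ℝ}

lemma integrable_tensorGram_sub_one_mul [IsFiniteMeasure μ] (hH : ∀ k, AEMeasurable (H k) μ)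
    (hV : ∀ k, AEMeasurable (V k) μ) (hsign : ∀ k ω x, V k ω x = 1 ∨ V k ω x = -1)
    (i : Fin 4 → ∀ k, ι k) :
    Integrable (fun ω => (tensorGram (fun k => H k ω) (fun k => V k ω) - 1) (i 0) (i 1) *
      (tensorGram (fun k => H k ω) (fun k => V k ω) - 1) (i 2) (i 3)) μ := by
  simp only [fun ω => tensorGram_sub_one_mul (fun k => H k ω) (hsign · ω) i]
  refine (integrable_collisionIndicator_mul hH i).mul_bdd (c := 1)
    (AEMeasurable.aestronglyMeasurable ?_) (.of_forall fun ω => ?_)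
  · exact Finset.aemeasurable_fun_prod _ fun k _ => Finset.aemeasurable_fun_prod _ fun t _ =>
      (measurable_pi_apply (i t k)).comp_aemeasurable (hV k)
  · simp only [norm_prod]
    refine (Finset.prod_eq_one fun k _ => Finset.prod_eq_one fun t _ => ?_).le
    rcases hsign k ω (i t k) with h | h <;> simp [h]

lemma abs_integral_tensorGram_sub_one_mul_le [Fintype G] [IsProbabilityMeasure μ]
    (hH : ∀ k, KWiseUniform μ 2 (H k)) (hV : ∀ k, KWiseIndepSign μ 4 (V k))
    (hH_indep : iIndepFun H μ) (hV_indep : iIndepFun V μ)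
    (hHV : IndepFun (fun ω k => H k ω) (fun ω k => V k ω) μ) (i : Fin 4 → ∀ k, ι k) :
    |∫ ω, (tensorGram (fun k => H k ω) (fun k => V k ω) - 1) (i 0) (i 1) *
      (tensorGram (fun k => H k ω) (fun k => V k ω) - 1) (i 2) (i 3) ∂μ| ≤
      (Fintype.card G : ℝ)⁻¹ * ∏ k, pairingCount fun t => i t k := by
  let collisions (h : ∀ k, ι k → G) : ℝ :=
    collisionIndicator h (i 0) (i 1) * collisionIndicator h (i 2) (i 3)
  let signs (v : ∀ k, ι k → ℝ) : ℝ := ∏ k, ∏ t, v k (i t k)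
  have hV_meas k : AEMeasurable (V k) μ := (hV k).aemeasurable
  have hsigns_meas : Measurable signs := by fun_prop
  have hfactor : ∫ ω, collisions (fun k => H k ω) * signs (fun k => V k ω) ∂μ =
      (∫ ω, collisions fun k => H k ω ∂μ) * ∫ ω, signs fun k => V k ω ∂μ :=
    (hHV.comp (φ := collisions) .of_discrete hsigns_meas).integral_fun_mul_eq_mul_integral
      (integrable_collisionIndicator_mul (fun k => (hH k).aemeasurable) i).aestronglyMeasurable
      (hsigns_meas.comp_aemeasurable (aemeasurable_pi_lambda _ hV_meas)).aestronglyMeasurable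
  have hsigns : |∫ ω, signs (fun k => V k ω) ∂μ| ≤ ∏ k, pairingCount fun t => i t k := by
    have hprod_meas k : Measurable fun v : ι k → ℝ => ∏ t, v (i t k) := by fun_prop
    rw [hV_indep.integral_fun_prod_comp (f := fun k v => ∏ t, v (i t k)) hV_meas
      fun k => (hprod_meas k).aestronglyMeasurable, Finset.abs_prod]
    exact Finset.prod_le_prod (fun _ _ => abs_nonneg _) fun k _ =>
      (hV k).abs_integral_prod_le_pairingCount fun t => i t k
  simp only [fun ω => tensorGram_sub_one_mul (fun k => H k ω) (fun k => (hV k).1 ω) i]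
  calc _ = |∫ ω, collisions (fun k => H k ω) ∂μ| * |∫ ω, signs (fun k => V k ω) ∂μ| :=
        (congrArg _ hfactor).trans (abs_mul _ _)
    _ ≤ _ := mul_le_mul (abs_integral_collisionIndicator_mul_le hH hH_indep i) hsigns
      (abs_nonneg _) (by positivity)

lemma secondMomentBound_tensorGram_sub_one [∀ k, Fintype (ι k)] [DecidableEq κ] [Fintype G]
    [IsProbabilityMeasure μ] (hH : ∀ k, KWiseUniform μ 2 (H k)) (hV : ∀ k, KWiseIndepSign μ 4 (V k))
    (hH_indep : iIndepFun H μ) (hV_indep : iIndepFun V μ)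
    (hHV : IndepFun (fun ω k => H k ω) (fun ω k => V k ω) μ) :
    SecondMomentBound μ (fun ω => tensorGram (fun k => H k ω) (fun k => V k ω) - 1)
      ((Fintype.card G : ℝ)⁻¹ * 3 ^ Fintype.card κ) := by
  have hpairing : MultilinearBound (fun i : Fin 4 → ∀ k, ι k => ∏ k, pairingCount fun t => i t k)
      (3 ^ Fintype.card κ) := by
    rw [← Finset.card_univ, ← Finset.prod_const]
    exact .pi (fun _ => multilinearBound_pairingCount) (fun _ => pairingCount_nonneg)
      fun _ => zero_le_three
  exact ⟨_, hpairing.const_mul (by positivity), fun i =>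
    ⟨integrable_tensorGram_sub_one_mul (fun k => (hH k).aemeasurable) (fun k => (hV k).aemeasurable)
      (fun k => (hV k).1) i,
      abs_integral_tensorGram_sub_one_mul_le hH hV hH_indep hV_indep hHV i⟩⟩

end TensorGram

section TensorSketch

lemma transpose_countSketch_mul_countSketch_apply {m : ℕ} {ι : Type*} (h : ι → Fin m) (v : ι → ℝ)
    (i j : ι) :
    ((countSketch h v)ᵀ * countSketch h v) i j = if h i = h j then v i * v j else 0 := by
  simp [countSketch, mul_apply, eq_comm]

variable {m : ℕ} [NeZero m]

lemma hashFam_eq_sum {q : ℕ} {n : Fin q → ℕ} (h : ∀ k, Fin (n k) → Fin m) (i : ∀ k, Fin (n k)) :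
    hashFam h i = ∑ k, h k (i k) := by
  have hcast (s : Finset (Fin q)) :
      ((∑ k ∈ s, h k (i k) : Fin m) : ℕ) = (∑ k ∈ s, (h k (i k) : ℕ)) % m := by
    classical
    induction s using Finset.induction_on with
    | empty => simp
    | insert k s hk ih => simp [Finset.sum_insert hk, Fin.val_add, ih]
  exact Fin.ext (hcast Finset.univ).symm

lemma hashPair_apply {ι₁ ι₂ : Type*} (h₁ : ι₁ → Fin m) (h₂ : ι₂ → Fin m) (i : ι₁ × ι₂) :
    hashPair h₁ h₂ i = h₁ i.1 + h₂ i.2 :=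
  Fin.ext (Fin.val_add _ _).symm

variable {p q : ℕ} {N : Fin p ⊕ Fin q → ℕ}

/-- The TensorSketch matrix on two consecutive blocks of modes. The blocks are kept apart because
its columns are indexed by the rows of a Kronecker product with one factor per block. -/
def tensorSketch (h : ∀ k, Fin (N k) → Fin m) (v : ∀ k, Fin (N k) → ℝ) :
    Matrix (Fin m) ((∀ j, Fin (N (.inl j))) × ∀ j, Fin (N (.inr j))) ℝ :=
  countSketch (hashPair (hashFam fun j => h (.inl j)) (hashFam fun j => h (.inr j)))
    fun i => (∏ j, v (.inl j) (i.1 j)) * ∏ j, v (.inr j) (i.2 j)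

lemma transpose_tensorSketch_mul_tensorSketch_sub_one (h : ∀ k, Fin (N k) → Fin m)
    (v : ∀ k, Fin (N k) → ℝ) :
    (tensorSketch h v)ᵀ * tensorSketch h v - 1 =
      (tensorGram h v - 1).submatrix (Equiv.sumPiEquivProdPi fun k => Fin (N k)).symm
        (Equiv.sumPiEquivProdPi fun k => Fin (N k)).symm := by
  rw [submatrix_sub, Pi.sub_apply, Pi.sub_apply, submatrix_one_equiv]
  congr 1
  ext i j
  rw [tensorSketch, transpose_countSketch_mul_countSketch_apply]
  simp only [hashPair_apply, hashFam_eq_sum, submatrix_apply, tensorGram, of_apply,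
    Fintype.sum_sum_type, Fintype.prod_sum_type, Finset.prod_mul_distrib,
    Equiv.sumPiEquivProdPi_symm_apply]

end TensorSketch

lemma KWiseIndepHash.mono {Ω ι : Type*} [MeasurableSpace Ω] {μ : Measure Ω} {k l m : ℕ}
    {h : Ω → ι → Fin m} (hh : KWiseIndepHash μ k h) (hl : l ≤ k) : KWiseIndepHash μ l h :=
  ⟨hh.1, fun t ht => hh.2 t (ht.trans hl)⟩

theorem randomized_proximal_TTALS_accuracy_general {Ω : Type*} [MeasurableSpace Ω] {μ : Measure Ω}
    [IsProbabilityMeasure μ] {m p q : ℕ} [NeZero m] {β γ : Type*} [Fintype β] [Fintype γ]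
    {N : Fin p ⊕ Fin q → ℕ} {H : ∀ k, Ω → Fin (N k) → Fin m} {V : ∀ k, Ω → Fin (N k) → ℝ}
    (hH : ∀ k, KWiseIndepHash μ 2 (H k)) (hV : ∀ k, KWiseIndepSign μ 4 (V k))
    (hHV : IndepHashSigns μ H V)
    {M : Matrix ((∀ j, Fin (N (.inl j))) × ∀ j, Fin (N (.inr j))) β ℝ}
    {A : Matrix ((∀ j, Fin (N (.inl j))) × ∀ j, Fin (N (.inr j))) γ ℝ} {Xt Xopt : Matrix β γ ℝ}
    {σ ε δ : ℝ} (hσ : 0 ≤ σ) (hε : 0 < ε) (hδ : 0 < δ)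
    (hXopt : ∀ X, proxObjective M A Xt σ Xopt ≤ proxObjective M A Xt σ X)
    (hm : max (8 * (M.rank : ℝ) ^ 2 * 3 ^ (p + q) / δ) (8 * (M.rank : ℝ) * 3 ^ (p + q) / (ε * δ)) ≤
      m) :
    1 - δ ≤ μ.real {ω |
      let S := tensorSketch (fun k => H k ω) (fun k => V k ω)
      ∀ Y, (∀ X, proxObjective (S * M) (S * A) Xt σ Y ≤ proxObjective (S * M) (S * A) Xt σ X) →
        proxObjective M A Xt σ Y ≤ (1 + ε) * proxObjective M A Xt σ Xopt} := by
  obtain ⟨hH_indep, hV_indep, hHV_indep⟩ := hHV.independent hH hV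
  have hgram := secondMomentBound_tensorGram_sub_one (fun k => (hH k).kWiseUniform) hV hH_indep
    hV_indep hHV_indep
  have hsketch := hgram.submatrix_equiv (Equiv.sumPiEquivProdPi fun k => Fin (N k)).symm
  simp only [← transpose_tensorSketch_mul_tensorSketch_sub_one, Fintype.card_fin,
    Fintype.card_sum] at hsketch
  have hm_pos : (0 : ℝ) < m := by exact_mod_cast NeZero.pos m
  rw [max_le_iff, div_le_iff₀ hδ, div_le_iff₀ (mul_pos hε hδ)] at hm
  refine one_sub_le_measureReal_proxObjective_le hsketch hσ hε.le hδ.le hXopt ?_ ?_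
  all_goals
    field_simp
    linarith

/-- Corollary 4.5, accuracy of the randomized proximal TT-ALS update:
fix a mode `k` of a `d`-th order tensor, with `p = k-1` TT-cores below (dimensions `na`,
ranks `ra`, `ra 0 = 1`) and `q' = d-k` TT-cores above (dimensions `nb`, ranks `rb`,
`rb q' = 1`), so `r_{k-1} = ra p`, `r_k = rb 0`, `s = r_{k-1} r_k` and `q = d - 1 = p + q'`.
Let `G_{<k}` (rows = chain products of the cores below) and `G_{>k}` (columns = chain
products of the cores above) be the TT interface matrices, and let
`H_k = G_{>k}ᵀ ⊗ G_{<k}` have full column rank with `∏_{i ≠ k} n_i > s`.  Let `A` be the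
transposed mode-`k` matricization of the data tensor, `Xt` the (transposed mode-2
matricized) current core `𝒢_k^{(t)}`, `σ > 0`, and let `S` be the random TensorSketch
matrix generated by mutually independent 3-wise independent hash maps and mutually
independent 4-wise independent sign functions on the modes `≠ k`.  If
`m = max{8s²(2+3^q)/δ, 8s(2+3^q)/(εδ)}`, then with probability at least `1 - δ` the
minimizer of the sketched proximal subproblem has proximal objective value within a factor
`1 + ε` of the optimal value `OPT` of the unsketched proximal subproblem. -/
theorem randomized_proximal_TTALS_accuracy
    {Ω : Type*} [MeasurableSpace Ω] (μ : Measure Ω) [IsProbabilityMeasure μ]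
    {m p q' nk : ℕ} [NeZero m]
    (na ra nb rb : ℕ → ℕ) (hra0 : ra 0 = 1) (hrbq : rb q' = 1)
    (Ga : (j : ℕ) → Fin (na j) → Matrix (Fin (ra j)) (Fin (ra (j + 1))) ℝ)
    (Gb : (j : ℕ) → Fin (nb j) → Matrix (Fin (rb j)) (Fin (rb (j + 1))) ℝ)
    (Glt : Matrix ((j : Fin p) → Fin (na j)) (Fin (ra p)) ℝ)
    (hGlt : ∀ i (a : Fin (ra 0)) c, Glt i c = ttChain ra na Ga p i a c)
    (Ggt : Matrix (Fin (rb 0)) ((j : Fin q') → Fin (nb j)) ℝ)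
    (hGgt : ∀ (a : Fin (rb 0)) i (b : Fin (rb q')), Ggt a i = ttChain rb nb Gb q' i a b)
    (hrank : (Matrix.kroneckerMap (· * ·) Glt Ggtᵀ).rank = ra p * rb 0)
    (hcard : ra p * rb 0 < (∏ j : Fin p, na j) * ∏ j : Fin q', nb j)
    (A : Matrix (((j : Fin p) → Fin (na j)) × ((j : Fin q') → Fin (nb j))) (Fin nk) ℝ)
    (Xt : Matrix (Fin (ra p) × Fin (rb 0)) (Fin nk) ℝ)
    (σ : ℝ) (hσ : 0 < σ)
    (Hlt : (j : Fin p) → Ω → Fin (na j) → Fin m) (Vlt : (j : Fin p) → Ω → Fin (na j) → ℝ)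
    (Hgt : (j : Fin q') → Ω → Fin (nb j) → Fin m) (Vgt : (j : Fin q') → Ω → Fin (nb j) → ℝ)
    (h3lt : ∀ j, KWiseIndepHash μ 3 (Hlt j)) (h4lt : ∀ j, KWiseIndepSign μ 4 (Vlt j))
    (h3gt : ∀ j, KWiseIndepHash μ 3 (Hgt j)) (h4gt : ∀ j, KWiseIndepSign μ 4 (Vgt j))
    (hmut : IndepHashSigns μ (κ := Fin p ⊕ Fin q')
      (n := Sum.elim (fun j : Fin p => na j) (fun j : Fin q' => nb j))
      (fun k => match k with | Sum.inl j => Hlt j | Sum.inr j => Hgt j)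
      (fun k => match k with | Sum.inl j => Vlt j | Sum.inr j => Vgt j))
    (Xopt : Matrix (Fin (ra p) × Fin (rb 0)) (Fin nk) ℝ)
    (hXopt : ∀ X,
      1 / 2 * frobSq (Matrix.kroneckerMap (· * ·) Glt Ggtᵀ * Xopt - A) +
          σ / 2 * frobSq (Xopt - Xt) ≤
        1 / 2 * frobSq (Matrix.kroneckerMap (· * ·) Glt Ggtᵀ * X - A) +
          σ / 2 * frobSq (X - Xt))
    (ε δ : ℝ) (hε : 0 < ε) (hδ : 0 < δ)
    (hm : (m : ℝ) = max (8 * ((ra p * rb 0 : ℕ) : ℝ) ^ 2 * (2 + 3 ^ (p + q')) / δ)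
      (8 * ((ra p * rb 0 : ℕ) : ℝ) * (2 + 3 ^ (p + q')) / (ε * δ))) :
    1 - δ ≤ (μ {ω |
      let S := countSketch
        (hashPair (hashFam (n := fun j : Fin p => na j) (fun j => Hlt j ω))
                  (hashFam (n := fun j : Fin q' => nb j) (fun j => Hgt j ω)))
        (fun i => (∏ j : Fin p, Vlt j ω (i.1 j)) * ∏ j : Fin q', Vgt j ω (i.2 j))
      ∀ Y : Matrix (Fin (ra p) × Fin (rb 0)) (Fin nk) ℝ,
        (∀ X,
          1 / 2 * frobSq (S * Matrix.kroneckerMap (· * ·) Glt Ggtᵀ * Y - S * A) +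
              σ / 2 * frobSq (Y - Xt) ≤
            1 / 2 * frobSq (S * Matrix.kroneckerMap (· * ·) Glt Ggtᵀ * X - S * A) +
              σ / 2 * frobSq (X - Xt)) →
          1 / 2 * frobSq (Matrix.kroneckerMap (· * ·) Glt Ggtᵀ * Y - A) +
              σ / 2 * frobSq (Y - Xt) ≤
            (1 + ε) * (1 / 2 * frobSq (Matrix.kroneckerMap (· * ·) Glt Ggtᵀ * Xopt - A) +
              σ / 2 * frobSq (Xopt - Xt))}).toReal := by
  have hm_le : max (8 * ((Matrix.kroneckerMap (· * ·) Glt Ggtᵀ).rank : ℝ) ^ 2 * 3 ^ (p + q') / δ)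
      (8 * ((Matrix.kroneckerMap (· * ·) Glt Ggtᵀ).rank : ℝ) * 3 ^ (p + q') / (ε * δ)) ≤ m := by
    rw [hm, hrank]
    gcongr <;> exact le_add_of_nonneg_left zero_le_two
  exact randomized_proximal_TTALS_accuracy_general
    (Sum.forall.2 ⟨fun j => (h3lt j).mono (by norm_num), fun j => (h3gt j).mono (by norm_num)⟩)
    (Sum.forall.2 ⟨h4lt, h4gt⟩) hmut hσ.le hε hδ hXopt hm_le
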